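/- arXiv:2008.12722 — 6 statements merged into one kernel-verified Lean document; each statement's English description precedes it below -/
import Mathlib

section
/- Let p : ℝ → ℝ be continuous, even, and strictly monotone on [0,∞), and define φ(a,b) = p(a)a + p(b)b − p(a+b)(a+b). Then for all real a, b one has φ(a,b) = 0 if and only if a = 0 or b = 0 or a + b = 0. -/
theorem phi_aux (p : ℝ → ℝ) (he : ∀ x, p (-x) = p x)
    (hm : StrictMonoOn p (Set.Ici (0 : ℝ))) (a b : ℝ)
    (h : p a * a + p b * b - p (a + b) * (a + b) = 0) : a = 0 ∨ b = 0 ∨ a + b = 0 := by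
  have key : ∀ x y : ℝ, 0 < x → 0 < y → p x * x + p y * y < p (x + y) * (x + y) := by
    intro x y hx hy
    have h1 : p x < p (x + y) := hm (Set.mem_Ici.2 hx.le) (Set.mem_Ici.2 (by linarith)) (by linarith)
    have h2 : p y < p (x + y) := hm (Set.mem_Ici.2 hy.le) (Set.mem_Ici.2 (by linarith)) (by linarith)
    nlinarith [mul_lt_mul_of_pos_right h1 hx, mul_lt_mul_of_pos_right h2 hy]
  by_contra hc
  push Not at hc
  obtain ⟨ha, hb, hab⟩ := hc
  have hes : p (-a + -b) = p (a + b) := by rw [← he (a + b)]; congr 1; ring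
  rcases lt_or_gt_of_ne ha with ha | ha <;> rcases lt_or_gt_of_ne hb with hb | hb
  · have := key (-a) (-b) (by linarith) (by linarith)
    rw [hes, he, he] at this
    linarith
  · rcases lt_or_gt_of_ne hab with hab | hab
    · have := key (-(a + b)) b (by linarith) hb
      rw [show -(a + b) + b = -a by ring, he, he] at this
      linarith
    · have := key (a + b) (-a) hab (by linarith)
      rw [show a + b + -a = b by ring, he] at this
      linarith
  · rcases lt_or_gt_of_ne hab with hab | hab
    · have := key (-(a + b)) a (by linarith) ha
      rw [show -(a + b) + a = -b by ring, he, he] at this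
      linarith
    · have := key (a + b) (-b) hab (by linarith)
      rw [show a + b + -b = a by ring, he] at this
      linarith
  · have := key a b ha hb
    linarith


/-- For `p` continuous, even and strictly monotone on `[0,∞)`, the zeros of
`φ(a,b) = p(a)a + p(b)b − p(a+b)(a+b)` are exactly `a = 0`, `b = 0` and `a + b = 0`. -/
theorem phi_zeros (p : ℝ → ℝ)
    (hp_cont : Continuous p)
    (hp_even : ∀ x, p (-x) = p x)
    (hp_mono : StrictMonoOn p (Set.Ici (0 : ℝ)) ∨ StrictAntiOn p (Set.Ici (0 : ℝ))) :
    ∀ a b : ℝ,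
      p a * a + p b * b - p (a + b) * (a + b) = 0 ↔ a = 0 ∨ b = 0 ∨ a + b = 0 := by

  intro a b
  constructor
  · intro h
    rcases hp_mono with hm | hm
    · exact phi_aux p hp_even hm a b h
    · refine phi_aux (fun x => -p x) (fun x => by simp [hp_even]) hm.neg a b ?_
      linarith
  · rintro (h | h | h)
    · subst h; simp
    · subst h; simp
    · obtain rfl : b = -a := by linarith
      rw [hp_even]; simp
end

section
/- Let p : ℝ → ℝ be continuously differentiable, even, and strictly monotone on [0,∞), and define φ(a,b) = p(a)a + p(b)b − p(a+b)(a+b). Then there exists a continuous function φ̃ : ℝ² \ {(0,0)} → ℝ which vanishes nowhere on ℝ² \ {(0,0)} such that φ(a,b) = a b (a+b) φ̃(a,b) for all (a,b) ≠ (0,0). -/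
/-- Averaged derivative of `p` along the segment from `a` to `a+b`. -/
noncomputable def phiQ (p : ℝ → ℝ) (a b : ℝ) : ℝ := ∫ t in (0:ℝ)..1, deriv p (a + b * t)

/-- The quotient of `φ(a,b)` by `b`. -/
noncomputable def phiG (p : ℝ → ℝ) (a b : ℝ) : ℝ := p b - p (a + b) - a * phiQ p a b

theorem phiQ_cont (p : ℝ → ℝ) (hp : ContDiff ℝ 1 p) :
    Continuous (fun x : ℝ × ℝ => phiQ p x.1 x.2) := by
  have hd : Continuous (deriv p) := hp.continuous_deriv le_rfl
  unfold phiQ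
  apply intervalIntegral.continuous_parametric_intervalIntegral_of_continuous'
  simp only [Function.uncurry_def]
  fun_prop

theorem phiQ_mul (p : ℝ → ℝ) (hp : ContDiff ℝ 1 p) (a b : ℝ) :
    b * phiQ p a b = p (a + b) - p a := by
  have hd : Continuous (deriv p) := hp.continuous_deriv le_rfl
  unfold phiQ
  rw [intervalIntegral.mul_integral_comp_add_mul,
    intervalIntegral.integral_deriv_eq_sub]
  · simp
  · intro x _
    exact (hp.differentiable one_ne_zero) x
  · exact hd.intervalIntegrable _ _

theorem phiG_mul (p : ℝ → ℝ) (hp : ContDiff ℝ 1 p) (a b : ℝ) :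
    b * phiG p a b = p a * a + p b * b - p (a + b) * (a + b) := by
  have h := phiQ_mul p hp a b
  unfold phiG
  linear_combination (-a) * h

theorem phiG_zero (p : ℝ → ℝ) (hp : ContDiff ℝ 1 p) (he : ∀ x, p (-x) = p x)
    (hm : StrictMonoOn p (Set.Ici (0 : ℝ))) (a : ℝ) (ha : a ≠ 0) : phiG p a 0 < 0 := by
  have hq : phiQ p a 0 = deriv p a := by simp [phiQ]
  have hpos : ∀ x : ℝ, 0 < x → p 0 < p x ∧ 0 ≤ deriv p x := by
    intro x hx
    refine ⟨hm (by simp) hx.le hx, ?_⟩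
    rw [← derivWithin_of_mem_nhds (Ici_mem_nhds hx)]
    exact hm.monotoneOn.derivWithin_nonneg
  simp only [phiG, hq, add_zero]
  rcases lt_or_gt_of_ne ha with h | h
  · obtain ⟨h1, h2⟩ := hpos (-a) (by linarith)
    have h3 : deriv p (-a) = - deriv p a := by
      have h4 := deriv_comp_neg p a
      have h5 : (fun x => p (-x)) = p := funext he
      rw [h5] at h4
      linarith
    rw [he] at h1
    rw [h3] at h2
    nlinarith
  · obtain ⟨h1, h2⟩ := hpos a h
    nlinarith

theorem phi_ne (p : ℝ → ℝ) (he : ∀ x, p (-x) = p x)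
    (hm : StrictMonoOn p (Set.Ici (0 : ℝ))) (a b : ℝ) (ha : a ≠ 0) (hb : b ≠ 0)
    (hc : a + b ≠ 0) : p a * a + p b * b - p (a + b) * (a + b) ≠ 0 := by
  have key : ∀ x y z : ℝ, 0 < x → 0 < y → x + y = z → p x * x + p y * y - p z * z < 0 := by
    intro x y z hx hy hz
    subst hz
    have h1 : p x < p (x + y) := hm hx.le (add_pos hx hy).le (by linarith)
    have h2 : p y < p (x + y) := hm hy.le (add_pos hx hy).le (by linarith)
    nlinarith
  have e1 := he a
  have e2 := he b
  have e3 := he (a + b)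
  rcases lt_or_gt_of_ne ha with h1 | h1 <;> rcases lt_or_gt_of_ne hb with h2 | h2 <;>
    rcases lt_or_gt_of_ne hc with h3 | h3
  · have := key (-a) (-b) (-(a+b)) (by linarith) (by linarith) (by ring)
    rw [e1, e2, e3] at this
    intro h; linarith
  · linarith
  · have := key (-(a+b)) b (-a) (by linarith) (by linarith) (by ring)
    rw [e1, e3] at this
    intro h; linarith
  · have := key (-a) (a+b) b (by linarith) (by linarith) (by ring)
    rw [e1] at this
    intro h; linarith
  · have := key a (-(a+b)) (-b) (by linarith) (by linarith) (by ring)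
    rw [e2, e3] at this
    intro h; linarith
  · have := key (a+b) (-b) a (by linarith) (by linarith) (by ring)
    rw [e2] at this
    intro h; linarith
  · linarith
  · have := key a b (a+b) (by linarith) (by linarith) (by ring)
    exact this.ne

theorem phi_den_ne (a b : ℝ) (h : (a, b) ≠ ((0:ℝ), (0:ℝ))) :
    (a * (a + b))^2 + (b * (a + b))^2 + (a * b)^2 ≠ 0 := by
  intro h0
  apply h
  have h1 : a * (a + b) = 0 := by
    nlinarith [sq_nonneg (a * (a + b)), sq_nonneg (b * (a + b)), sq_nonneg (a * b)]
  have h2 : b * (a + b) = 0 := by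
    nlinarith [sq_nonneg (a * (a + b)), sq_nonneg (b * (a + b)), sq_nonneg (a * b)]
  have h3 : a * b = 0 := by
    nlinarith [sq_nonneg (a * (a + b)), sq_nonneg (b * (a + b)), sq_nonneg (a * b)]
  have h4 : a = 0 := by
    have : a ^ 2 = 0 := by linarith
    simpa using this
  have h5 : b = 0 := by
    have : b ^ 2 = 0 := by linarith
    simpa using this
  rw [h4, h5]

theorem phi_mono_case (p : ℝ → ℝ)
    (hp : ContDiff ℝ 1 p) (he : ∀ x, p (-x) = p x)
    (hm : StrictMonoOn p (Set.Ici (0 : ℝ))) :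
    ∃ φt : ℝ × ℝ → ℝ,
      ContinuousOn φt {x : ℝ × ℝ | x ≠ (0, 0)} ∧
      (∀ x : ℝ × ℝ, x ≠ (0, 0) → φt x ≠ 0) ∧
      ∀ a b : ℝ, (a, b) ≠ ((0 : ℝ), (0 : ℝ)) →
        p a * a + p b * b - p (a + b) * (a + b) = a * b * (a + b) * φt (a, b) := by
  have hid : ∀ a b : ℝ, (a, b) ≠ ((0 : ℝ), (0 : ℝ)) →
        p a * a + p b * b - p (a + b) * (a + b) = a * b * (a + b) *
      ((a * (a + b) * phiG p a b + b * (a + b) * phiG p b a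
        - a * b * phiG p a (-(a + b))) /
      ((a * (a + b))^2 + (b * (a + b))^2 + (a * b)^2)) := by
    intro a b hab
    have hD := phi_den_ne a b hab
    have g1 := phiG_mul p hp a b
    have g2 := phiG_mul p hp b a
    have g3 := phiG_mul p hp a (-(a + b))
    rw [show a + -(a + b) = -b by ring, he, he] at g3
    rw [add_comm b a] at g2
    rw [mul_div_assoc', eq_div_iff hD]
    linear_combination (-(a * (a + b))^2) * g1 - (b * (a + b))^2 * g2 - (a * b)^2 * g3
  refine ⟨fun x => (x.1 * (x.1 + x.2) * phiG p x.1 x.2 + x.2 * (x.1 + x.2) * phiG p x.2 x.1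
      - x.1 * x.2 * phiG p x.1 (-(x.1 + x.2))) /
      ((x.1 * (x.1 + x.2))^2 + (x.2 * (x.1 + x.2))^2 + (x.1 * x.2)^2), ?_, ?_, hid⟩
  · have hG : Continuous (fun x : ℝ × ℝ => phiG p x.1 x.2) := by
      have := hp.continuous
      have := phiQ_cont p hp
      unfold phiG
      fun_prop
    have hG2 : Continuous (fun x : ℝ × ℝ => phiG p x.2 x.1) :=
      hG.comp (continuous_snd.prodMk continuous_fst)
    have hG3 : Continuous (fun x : ℝ × ℝ => phiG p x.1 (-(x.1 + x.2))) :=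
      hG.comp (continuous_fst.prodMk (continuous_fst.add continuous_snd).neg)
    apply ContinuousOn.div
    · apply Continuous.continuousOn
      fun_prop
    · fun_prop
    · rintro ⟨a, b⟩ hx
      exact phi_den_ne a b hx
  · rintro ⟨a, b⟩ hx
    have hD := phi_den_ne a b hx
    by_cases ha : a = 0
    · subst ha
      have hb : b ≠ 0 := by rintro rfl; exact hx rfl
      refine div_ne_zero ?_ hD
      have := (phiG_zero p hp he hm b hb).ne
      simp [hb, this]
    by_cases hb : b = 0
    · subst hb
      refine div_ne_zero ?_ hD
      have := (phiG_zero p hp he hm a ha).ne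
      simp [ha, this]
    by_cases hc : a + b = 0
    · refine div_ne_zero ?_ hD
      have := (phiG_zero p hp he hm a ha).ne
      simp [ha, hb, hc, this]
    · intro h0
      have h1 := hid a b hx
      simp only at h0
      rw [h0, mul_zero] at h1
      exact phi_ne p he hm a b ha hb hc h1

/-- For `p` continuously differentiable, even and strictly monotone on `[0,∞)`,
one may factor `φ(a,b) = a b (a+b) φ̃(a,b)` with `φ̃` continuous and
non-vanishing away from the origin. -/
theorem phi_factorisation (p : ℝ → ℝ)
    (hp_smooth : ContDiff ℝ 1 p)
    (hp_even : ∀ x, p (-x) = p x)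
    (hp_mono : StrictMonoOn p (Set.Ici (0 : ℝ)) ∨ StrictAntiOn p (Set.Ici (0 : ℝ))) :
    ∃ φt : ℝ × ℝ → ℝ,
      ContinuousOn φt {x : ℝ × ℝ | x ≠ (0, 0)} ∧
      (∀ x : ℝ × ℝ, x ≠ (0, 0) → φt x ≠ 0) ∧
      ∀ a b : ℝ, (a, b) ≠ ((0 : ℝ), (0 : ℝ)) →
        p a * a + p b * b - p (a + b) * (a + b) = a * b * (a + b) * φt (a, b) := by
  rcases hp_mono with hm | hm
  · exact phi_mono_case p hp_smooth hp_even hm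
  · obtain ⟨f, h1, h2, h3⟩ := phi_mono_case (fun x => - p x) hp_smooth.neg
      (fun x => by simp only [hp_even]) (fun x hx y hy hxy => neg_lt_neg (hm hx hy hxy))
    refine ⟨fun x => - f x, h1.neg, fun x hx => neg_ne_zero.mpr (h2 x hx), ?_⟩
    intro a b hab
    have := h3 a b hab
    linear_combination -this
end

section
/- Let p : ℝ → ℝ be differentiable, even, and strictly monotone on [0,∞), and define φ(a,b) = p(a)a + p(b)b − p(a+b)(a+b). Then for every fixed b > 0, the function a ↦ φ(a,b) is differentiable at a = 0 with derivative equal to −p'(b)·b − (p(b) − p(0)), and this derivative is nonzero. -/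
/-- For `p` differentiable, even and strictly monotone on `[0,∞)` and `b > 0`,
the map `a ↦ φ(a,b)` has a derivative at `a = 0` equal to
`−p'(b) b − (p(b) − p(0))`, and this derivative is nonzero. -/
theorem phi_deriv_at_zero (p : ℝ → ℝ)
    (hp_diff : Differentiable ℝ p)
    (hp_even : ∀ x, p (-x) = p x)
    (hp_mono : StrictMonoOn p (Set.Ici (0 : ℝ)) ∨ StrictAntiOn p (Set.Ici (0 : ℝ)))
    (b : ℝ) (hb : 0 < b) :
    HasDerivAt (fun a : ℝ => p a * a + p b * b - p (a + b) * (a + b))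
        (-(deriv p b) * b - (p b - p 0)) 0 ∧
      -(deriv p b) * b - (p b - p 0) ≠ 0 := by
  have hw : derivWithin p (Set.Ici 0) b = deriv p b :=
    derivWithin_of_mem_nhds (Ici_mem_nhds hb)
  have h0 : (0 : ℝ) ∈ Set.Ici (0 : ℝ) := Set.self_mem_Ici
  have hb' : b ∈ Set.Ici (0 : ℝ) := hb.le
  constructor
  · have h1 : HasDerivAt p (deriv p 0) 0 := (hp_diff 0).hasDerivAt
    have h2 : HasDerivAt p (deriv p b) (0 + b) := by
      rw [zero_add]; exact (hp_diff b).hasDerivAt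
    have h3 : HasDerivAt (fun a : ℝ => p (a + b)) (deriv p b) 0 := h2.comp_add_const 0 b
    have h4 := ((h1.mul (hasDerivAt_id (0 : ℝ))).add_const (p b * b)).sub
      (h3.mul ((hasDerivAt_id (0 : ℝ)).add_const b))
    refine h4.congr_deriv ?_
    simp
    ring
  · rcases hp_mono with h | h
    · have h1 : 0 ≤ deriv p b := hw ▸ h.monotoneOn.derivWithin_nonneg
      have h2 := h h0 hb' hb
      have h3 := mul_nonneg h1 hb.le
      apply ne_of_lt
      linarith
    · have h1 : deriv p b ≤ 0 := hw ▸ h.antitoneOn.derivWithin_nonpos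
      have h2 := h h0 hb' hb
      have h3 := mul_nonneg (neg_nonneg.mpr h1) hb.le
      apply ne_of_gt
      linarith
end

section
/- Under assumptions (A1) and (A3), there exist δ' > 0 and positive constants c and C (depending only on p and j*) such that for all (a,b) with 0 < r ≤ δ', where r = √(a²+b²), one has c |a b (a+b)| r^{2j*−2} ≤ |φ(a,b)| ≤ C |a b (a+b)| r^{2j*−2}. -/
theorem pow_sub_upper (m : ℕ) (x y : ℝ) (hx : 0 ≤ x) (hy : 0 ≤ y) :
    (x + y) ^ (m + 1) - x ^ (m + 1) ≤ (m + 1) * y * (x + y) ^ m := by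
  induction m with
  | zero => simp
  | succ m ih =>
    have h1 : x ^ (m + 1) ≤ (x + y) ^ (m + 1) := pow_le_pow_left₀ hx (by linarith) _
    have h2 := mul_le_mul_of_nonneg_left ih (add_nonneg hx hy)
    have h3 := mul_le_mul_of_nonneg_left h1 hy
    push_cast
    have e1 : (x + y) ^ (m + 1 + 1) = (x + y) * (x + y) ^ (m + 1) := by ring
    have e2 : x ^ (m + 1 + 1) = x * x ^ (m + 1) := by ring
    have e3 : (x + y) * ((m + 1) * y * (x + y) ^ m) = (m + 1) * y * (x + y) ^ (m + 1) := by ring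
    rw [e1, e2]
    nlinarith

theorem pow_sub_lower (m : ℕ) (x y : ℝ) (hx : 0 ≤ x) (hy : 0 ≤ y) :
    y * (x + y) ^ m ≤ (x + y) ^ (m + 1) - x ^ (m + 1) := by
  have h1 : x ^ m ≤ (x + y) ^ m := pow_le_pow_left₀ hx (by linarith) _
  have h3 := mul_le_mul_of_nonneg_left h1 hx
  have e1 : (x + y) ^ (m + 1) = x * (x + y) ^ m + y * (x + y) ^ m := by ring
  have e2 : x ^ (m + 1) = x * x ^ m := by ring
  rw [e1, e2]
  linarith

theorem reduce_signs (f : ℝ → ℝ) (hf : ∀ x, f (-x) = -f x) (a b : ℝ) :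
    ∃ x y : ℝ, 0 ≤ x ∧ 0 ≤ y ∧ |a * b * (a + b)| = x * y * (x + y) ∧
      |f a + f b - f (a + b)| = |f (x + y) - f x - f y| ∧
      x + y ≤ 2 * Real.sqrt (a ^ 2 + b ^ 2) ∧ Real.sqrt (a ^ 2 + b ^ 2) ≤ 2 * (x + y) := by
  have hr := Real.sqrt_nonneg (a ^ 2 + b ^ 2)
  have hr2 := Real.sq_sqrt (by positivity : 0 ≤ a ^ 2 + b ^ 2)
  set r := Real.sqrt (a ^ 2 + b ^ 2)
  have key : ∀ x y : ℝ, 0 ≤ x → 0 ≤ y →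
      (a * b * (a + b) = x * y * (x + y) ∨ a * b * (a + b) = - (x * y * (x + y))) →
      (f a + f b - f (a + b) = f (x + y) - f x - f y ∨
        f a + f b - f (a + b) = - (f (x + y) - f x - f y)) →
      (x + y) ^ 2 ≤ 4 * (a ^ 2 + b ^ 2) → a ^ 2 + b ^ 2 ≤ 4 * (x + y) ^ 2 → 
      ∃ x y : ℝ, 0 ≤ x ∧ 0 ≤ y ∧ |a * b * (a + b)| = x * y * (x + y) ∧
      |f a + f b - f (a + b)| = |f (x + y) - f x - f y| ∧
      x + y ≤ 2 * r ∧ r ≤ 2 * (x + y) := by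
    intro x y hx hy h1 h2 h3 h4
    refine ⟨x, y, hx, hy, ?_, abs_eq_abs.mpr h2, ?_, ?_⟩
    · rw [← abs_of_nonneg (by positivity : 0 ≤ x * y * (x + y))]
      exact abs_eq_abs.mpr h1
    · apply le_of_sq_le_sq _ (by positivity) <;> nlinarith
    · apply le_of_sq_le_sq _ (by positivity) <;> nlinarith
  have hfa := hf a
  have hfb := hf b
  have hfab := hf (a + b)
  rcases le_total 0 a with ha | ha <;> rcases le_total 0 b with hb | hb
  · refine key a b ha hb (Or.inl rfl) (Or.inr (by ring)) ?_ ?_ <;> nlinarith [mul_nonneg ha hb, sq_nonneg (a-b)]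
  · rcases le_total 0 (a + b) with h | h
    · have e : a + b + -b = a := by ring
      refine key (a + b) (-b) h (by linarith) (Or.inr (by ring)) (Or.inl ?_) ?_ ?_
      · rw [e, hfb]; ring
      · nlinarith
      · nlinarith
    · have e : -(a + b) + a = -b := by ring
      refine key (-(a + b)) a (by linarith) ha (Or.inl (by ring)) (Or.inr ?_) ?_ ?_
      · rw [e, hfb, hfab]; ring
      · nlinarith
      · nlinarith
  · rcases le_total 0 (a + b) with h | h
    · have e : a + b + -a = b := by ring
      refine key (a + b) (-a) h (by linarith) (Or.inr (by ring)) (Or.inl ?_) ?_ ?_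
      · rw [e, hfa]; ring
      · nlinarith
      · nlinarith
    · have e : -(a + b) + b = -a := by ring
      refine key (-(a + b)) b (by linarith) hb (Or.inl (by ring)) (Or.inr ?_) ?_ ?_
      · rw [e, hfa, hfab]; ring
      · nlinarith
      · nlinarith
  · have e : -a + -b = -(a + b) := by ring
    refine key (-a) (-b) (by linarith) (by linarith) (Or.inr (by ring)) (Or.inl ?_) ?_ ?_
    · rw [e, hfa, hfb, hfab]; ring
    · nlinarith [sq_nonneg (a - b)]
    · nlinarith [mul_nonneg_of_nonpos_of_nonpos ha hb]

theorem main_est (k : ℕ) (q : ℝ → ℝ) (L δ : ℝ) (hL : 0 ≤ L)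
    (hq : ∀ x y : ℝ, 0 ≤ x → x ≤ δ → 0 ≤ y → y ≤ δ → |q x - q y| ≤ L * |x - y|)
    (hδ : 2 * (2 * k + 5) * L * δ ≤ |q 0|)
    (x y : ℝ) (hy : 0 ≤ y) (hyx : y ≤ x) (hs : x + y ≤ δ) :
    |q 0| * (x * y * (x + y) ^ (2 * k + 1)) ≤
      |(x + y) ^ (2 * k + 3) * q (x + y) - x ^ (2 * k + 3) * q x - y ^ (2 * k + 3) * q y| ∧
    |(x + y) ^ (2 * k + 3) * q (x + y) - x ^ (2 * k + 3) * q x - y ^ (2 * k + 3) * q y| ≤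
      (4 * k + 5) * |q 0| * (x * y * (x + y) ^ (2 * k + 1)) := by
  have hx : 0 ≤ x := hy.trans hyx
  obtain ⟨s, hsdef⟩ : ∃ s, s = x + y := ⟨_, rfl⟩
  have hs0 : 0 ≤ s := by linarith
  have xs : x ≤ s := by linarith
  have ys : y ≤ s := by linarith
  have kd : ∀ t, 0 ≤ t → t ≤ s → |q t - q 0| ≤ L * t := by
    intro t ht hts
    have := hq t 0 ht (by linarith) le_rfl (by linarith)
    rwa [sub_zero, abs_of_nonneg ht] at this
  have k1 := kd s hs0 le_rfl
  have k2 := kd y hy ys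
  have k3 : |q s - q x| ≤ L * y := by
    have := hq s x hs0 (by linarith) hx (by linarith)
    rwa [show s - x = y by linarith, abs_of_nonneg hy] at this
  have l1 := pow_sub_lower (2 * k + 1) x y hx hy
  have l2 := pow_sub_lower (2 * k + 1) y x hy hx
  have u1 := pow_sub_upper (2 * k + 1) x y hx hy
  have u2 := pow_sub_upper (2 * k + 1) y x hy hx
  have u3 := pow_sub_upper (2 * k + 2) x y hx hy
  rw [add_comm y x] at l2 u2
  rw [← hsdef] at hs l1 l2 u1 u2 u3 ⊢
  push_cast at u1 u2 u3
  set P := s ^ (2 * k + 1) with hP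
  have hP0 : 0 ≤ P := by positivity
  set M := s ^ (2 * k + 3) - x ^ (2 * k + 3) - y ^ (2 * k + 3) with hM
  have eM : M = x * (s ^ (2 * k + 1 + 1) - x ^ (2 * k + 1 + 1))
      + y * (s ^ (2 * k + 1 + 1) - y ^ (2 * k + 1 + 1)) := by
    have : y = s - x := by linarith
    rw [hM, this]; ring
  have Ml : 2 * (x * y * P) ≤ M := by
    rw [eM]
    nlinarith [mul_le_mul_of_nonneg_left l1 hx, mul_le_mul_of_nonneg_left l2 hy]
  have Mu : M ≤ (4 * k + 4) * (x * y * P) := by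
    rw [eM]
    nlinarith [mul_le_mul_of_nonneg_left u1 hx, mul_le_mul_of_nonneg_left u2 hy]
  set E := (s ^ (2 * k + 3) - x ^ (2 * k + 3)) * (q s - q 0) + x ^ (2 * k + 3) * (q s - q x)
    - y ^ (2 * k + 3) * (q y - q 0) with hE
  have decomp : s ^ (2 * k + 3) * q s - x ^ (2 * k + 3) * q x - y ^ (2 * k + 3) * q y
      = q 0 * M + E := by rw [hM, hE]; ring
  have px : x ^ (2 * k + 3) ≤ s ^ (2 * k + 3) := pow_le_pow_left₀ hx xs _
  have py : y ^ (2 * k + 3) ≤ s ^ (2 * k + 3) := pow_le_pow_left₀ hy ys _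
  have hsP : s ^ (2 * k + 3) = s ^ 2 * P := by rw [hP]; ring
  have hsP2 : s ^ (2 * k + 2) = s * P := by rw [hP]; ring
  have E1 : |(s ^ (2 * k + 3) - x ^ (2 * k + 3)) * (q s - q 0)| ≤
      ((2 * k + 3) * y * (s * P)) * (L * s) := by
    rw [abs_mul, abs_of_nonneg (by linarith)]
    apply mul_le_mul _ k1 (abs_nonneg _) (by positivity)
    rw [← hsP2]
    have : (2 * (k : ℝ) + 2 + 1) = 2 * k + 3 := by ring
    rw [this] at u3
    exact u3
  have E2 : |x ^ (2 * k + 3) * (q s - q x)| ≤ (s ^ 2 * P) * (L * y) := by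
    rw [abs_mul, abs_of_nonneg (by positivity), ← hsP]
    exact mul_le_mul px k3 (abs_nonneg _) (by positivity)
  have E3 : |y ^ (2 * k + 3) * (q y - q 0)| ≤ (s ^ 2 * P) * (L * y) := by
    rw [abs_mul, abs_of_nonneg (by positivity), ← hsP]
    exact mul_le_mul py k2 (abs_nonneg _) (by positivity)
  have E4 : |E| ≤ (2 * k + 5) * L * s * (y * P) * s := by
    rw [abs_le] at *
    constructor <;> rw [hE] <;> linarith [E1.1, E1.2, E2.1, E2.2, E3.1, E3.2]
  have E5 : |E| ≤ |q 0| * (x * y * P) := by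
    calc |E| ≤ (2 * k + 5) * L * s * (y * P) * s := E4
      _ ≤ (2 * k + 5) * L * s * (y * P) * (2 * x) := by gcongr; linarith
      _ = (2 * (2 * k + 5) * L * s) * (x * y * P) := by ring
      _ ≤ (2 * (2 * k + 5) * L * δ) * (x * y * P) := by gcongr
      _ ≤ _ := by gcongr
  have hW : 0 ≤ x * y * P := by positivity
  have hM0 : 0 ≤ M := by linarith
  have aM : |q 0 * M| = |q 0| * M := by rw [abs_mul, abs_of_nonneg hM0]
  have m1 := mul_le_mul_of_nonneg_left Ml (abs_nonneg (q 0))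
  have m2 := mul_le_mul_of_nonneg_left Mu (abs_nonneg (q 0))
  rw [decomp]
  constructor
  · have := abs_sub_abs_le_abs_sub (q 0 * M) (-E)
    rw [abs_neg, sub_neg_eq_add] at this
    linarith
  · have := abs_add_le (q 0 * M) E
    linarith


/-- Under assumptions (A1) and (A3), the low-frequency bound
`|φ(a,b)| ≍ |a b (a+b)| r^{2j*−2}` holds for `0 < r = √(a²+b²) ≤ δ'`. -/
theorem phi_low_frequency_bound
    (j : ℕ) (hj : 1 ≤ j)
    (p : ℝ → ℝ)
    -- (A1)
    (hp_smooth : ContDiff ℝ 2 p)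
    (hp_even : ∀ x, p (-x) = p x)
    (hp_mono : StrictMonoOn p (Set.Ici (0 : ℝ)) ∨ StrictAntiOn p (Set.Ici (0 : ℝ)))
    -- (A3)
    (δ₀ : ℝ) (hδ₀ : 0 < δ₀) (pt : ℝ → ℝ)
    (hpt_lip : LocallyLipschitz pt) (hpt0 : pt 0 ≠ 0)
    (hA3 : ∀ ξ : ℝ, |ξ| ≤ δ₀ → p ξ = p 0 + ξ ^ (2 * j) * pt ξ) :
    ∃ δ' c C : ℝ, 0 < δ' ∧ 0 < c ∧ 0 < C ∧
      ∀ a b : ℝ, 0 < Real.sqrt (a ^ 2 + b ^ 2) → Real.sqrt (a ^ 2 + b ^ 2) ≤ δ' →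
        c * |a * b * (a + b)| * Real.sqrt (a ^ 2 + b ^ 2) ^ (2 * j - 2) ≤
          |p a * a + p b * b - p (a + b) * (a + b)| ∧
        |p a * a + p b * b - p (a + b) * (a + b)| ≤
          C * |a * b * (a + b)| * Real.sqrt (a ^ 2 + b ^ 2) ^ (2 * j - 2) := by
  obtain ⟨k, rfl⟩ : ∃ k, j = k + 1 := ⟨j - 1, by omega⟩
  obtain ⟨K, t, ht, hK⟩ := hpt_lip 0
  obtain ⟨ε, hε, hεt⟩ := Metric.mem_nhds_iff.mp ht
  have hq0 : 0 < |pt 0| := abs_pos.mpr hpt0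
  set D : ℝ := 2 * (2 * k + 5) * (K + 1) with hD
  have hDpos : 0 < D := by positivity
  obtain ⟨δ, hδ, hδ1, hδ2, hδ3⟩ : ∃ δ : ℝ, 0 < δ ∧ δ ≤ δ₀ ∧ δ < ε ∧ δ ≤ |pt 0| / D := by
    refine ⟨min δ₀ (min (ε / 2) (|pt 0| / D)), by positivity, min_le_left _ _, ?_, ?_⟩
    · exact lt_of_le_of_lt ((min_le_right _ _).trans (min_le_left _ _)) (by linarith)
    · exact (min_le_right _ _).trans (min_le_right _ _)
  have hlip : ∀ x y : ℝ, 0 ≤ x → x ≤ δ → 0 ≤ y → y ≤ δ →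
      |pt x - pt y| ≤ ((K : ℝ) + 1) * |x - y| := by
    intro x y hx hx' hy hy'
    have mem : ∀ z : ℝ, 0 ≤ z → z ≤ δ → z ∈ t := by
      intro z hz hz'
      apply hεt
      rw [Metric.mem_ball, Real.dist_eq, sub_zero, abs_of_nonneg hz]
      linarith
    have := hK.dist_le_mul x (mem x hx hx') y (mem y hy hy')
    rw [Real.dist_eq, Real.dist_eq] at this
    nlinarith [abs_nonneg (x - y)]
  have hδ4 : 2 * (2 * k + 5) * ((K : ℝ) + 1) * δ ≤ |pt 0| := by
    rw [le_div_iff₀ hDpos] at hδ3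
    linarith
  have hmain : ∀ x y : ℝ, 0 ≤ x → 0 ≤ y → x + y ≤ δ →
      |pt 0| * (x * y * (x + y) ^ (2 * k + 1)) ≤
        |p (x + y) * (x + y) - p x * x - p y * y| ∧
      |p (x + y) * (x + y) - p x * x - p y * y| ≤
        (4 * k + 5) * |pt 0| * (x * y * (x + y) ^ (2 * k + 1)) := by
    intro x y hx hy hxy
    have e : p (x + y) * (x + y) - p x * x - p y * y =
        (x + y) ^ (2 * k + 3) * pt (x + y) - x ^ (2 * k + 3) * pt x - y ^ (2 * k + 3) * pt y := by
      rw [hA3 (x + y) (by rw [abs_of_nonneg (by linarith)]; linarith),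
        hA3 x (by rw [abs_of_nonneg (by linarith)]; linarith),
        hA3 y (by rw [abs_of_nonneg (by linarith)]; linarith)]
      ring
    rw [e]
    rcases le_total y x with h | h
    · exact main_est k pt (K + 1) δ (by positivity) hlip hδ4 x y hy h hxy
    · have := main_est k pt (K + 1) δ (by positivity) hlip hδ4 y x hx h (by linarith)
      rw [add_comm y x, mul_comm y x, sub_right_comm] at this
      exact this
  refine ⟨δ / 2, |pt 0| / 2 ^ (2 * k), (4 * k + 5) * |pt 0| * 2 ^ (2 * k), by positivity,
    by positivity, by positivity, ?_⟩
  intro a b hr0 hr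
  obtain ⟨x, y, hx, hy, h1, h2, h3, h4⟩ :=
    reduce_signs (fun x => p x * x) (fun x => by simp [hp_even]) a b
  set r := Real.sqrt (a ^ 2 + b ^ 2)
  obtain ⟨g1, g2⟩ := hmain x y hx hy (by linarith)
  rw [h1, h2, show 2 * (k + 1) - 2 = 2 * k by omega]
  have hxy : 0 ≤ x * y * (x + y) := by positivity
  have w1 : r ^ (2 * k) ≤ 2 ^ (2 * k) * (x + y) ^ (2 * k) := by
    rw [← mul_pow]; exact pow_le_pow_left₀ hr0.le h4 _
  have w2 : (x + y) ^ (2 * k) ≤ 2 ^ (2 * k) * r ^ (2 * k) := by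
    rw [← mul_pow]; exact pow_le_pow_left₀ (by positivity) h3 _
  constructor
  · refine le_trans ?_ g1
    calc |pt 0| / 2 ^ (2 * k) * (x * y * (x + y)) * r ^ (2 * k)
        ≤ |pt 0| / 2 ^ (2 * k) * (x * y * (x + y)) * (2 ^ (2 * k) * (x + y) ^ (2 * k)) := by
          gcongr
      _ = _ := by field_simp; ring
  · refine g2.trans ?_
    calc (4 * k + 5) * |pt 0| * (x * y * (x + y) ^ (2 * k + 1))
        = (4 * k + 5) * |pt 0| * (x * y * (x + y)) * (x + y) ^ (2 * k) := by ring
      _ ≤ (4 * k + 5) * |pt 0| * (x * y * (x + y)) * (2 ^ (2 * k) * r ^ (2 * k)) := by gcongr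
      _ = _ := by ring
end

section
/- Under assumptions (A1) and (A2), there exist R ≥ 1 and positive constants c and C (depending only on p and α) such that for all (a,b) with |a| ≤ 1 and |b| ≥ R, one has c |a| (1 + |b|^α) ≤ |φ(a,b)| ≤ C |a| (1 + |b|^α). -/
open Filter Topology in
theorem rpow_cmp (α : ℝ) (hα : α ∈ Set.Icc (-1 : ℝ) 1) (x r : ℝ) (hr : 0 < r)
    (h1 : r / 2 ≤ x) (h2 : x ≤ 2 * r) : x ^ α ≤ 2 * r ^ α := by
  have hx : 0 < x := by linarith
  have hrp : 0 < r ^ α := Real.rpow_pos_of_pos hr α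
  rcases le_total 0 α with h | h
  · calc x ^ α ≤ (2 * r) ^ α := Real.rpow_le_rpow hx.le h2 h
      _ = 2 ^ α * r ^ α := Real.mul_rpow (by norm_num) hr.le
      _ ≤ 2 ^ (1 : ℝ) * r ^ α := by
          gcongr
          · norm_num
          · exact hα.2
      _ = 2 * r ^ α := by norm_num
  · calc x ^ α ≤ (2⁻¹ * r) ^ α :=
          Real.rpow_le_rpow_of_nonpos (by positivity) (by linarith) h
      _ = 2⁻¹ ^ α * r ^ α := Real.mul_rpow (by norm_num) hr.le
      _ = 2 ^ (-α) * r ^ α := by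
          rw [Real.inv_rpow (by norm_num), Real.rpow_neg (by norm_num)]
      _ ≤ 2 ^ (1 : ℝ) * r ^ α := by
          gcongr
          · norm_num
          · linarith [hα.1]
      _ = 2 * r ^ α := by norm_num

theorem phi_mvt (p : ℝ → ℝ) (hp : Differentiable ℝ p) (a b : ℝ) :
    ∃ t ∈ Set.Ioo (0 : ℝ) 1, p a * a + p b * b - p (a + b) * (a + b) =
      a * (p a - (p (b + t * a) + (b + t * a) * deriv p (b + t * a))) := by
  have hd : ∀ t : ℝ, HasDerivAt (fun t => p (b + t * a) * (b + t * a))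
      (deriv p (b + t * a) * a * (b + t * a) + p (b + t * a) * a) t := by
    intro t
    have h1 : HasDerivAt (fun t : ℝ => b + t * a) a t := by
      simpa using ((hasDerivAt_id t).mul_const a).const_add b
    exact (((hp (b + t * a)).hasDerivAt).comp t h1).mul h1
  obtain ⟨t, ht, h⟩ := exists_hasDerivAt_eq_slope (fun t => p (b + t * a) * (b + t * a))
    (fun t => deriv p (b + t * a) * a * (b + t * a) + p (b + t * a) * a) one_pos
    (fun t _ => (hd t).continuousAt.continuousWithinAt) (fun t _ => hd t)
  refine ⟨t, ht, ?_⟩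
  simp only [one_mul, zero_mul, add_zero, sub_zero, div_one] at h
  rw [add_comm a b]
  linarith

open Filter Topology in
theorem phi_mono
    (α : ℝ) (hα : α ∈ Set.Icc (-1 : ℝ) 1) (hα0 : α ≠ 0)
    (p : ℝ → ℝ)
    (hp : Differentiable ℝ p)
    (hp_even : ∀ x, p (-x) = p x)
    (hm : StrictMonoOn p (Set.Ici (0 : ℝ)))
    (c₀ C₀ R₀ : ℝ) (hc₀ : 0 < c₀) (hc₀C₀ : c₀ ≤ C₀) (hR₀ : 1 ≤ R₀)
    (hA2₀ : ∀ ξ : ℝ, R₀ ≤ |ξ| → c₀ * |ξ| ^ α ≤ |p ξ| ∧ |p ξ| ≤ C₀ * |ξ| ^ α)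
    (hA2₁ : ∀ ξ : ℝ, R₀ ≤ |ξ| →
      c₀ * |ξ| ^ (α - 1) ≤ |deriv p ξ| ∧ |deriv p ξ| ≤ C₀ * |ξ| ^ (α - 1)) :
    ∃ R c C : ℝ, 1 ≤ R ∧ 0 < c ∧ 0 < C ∧
      ∀ a b : ℝ, |a| ≤ 1 → R ≤ |b| →
        c * |a| * (1 + |b| ^ α) ≤ |p a * a + p b * b - p (a + b) * (a + b)| ∧
        |p a * a + p b * b - p (a + b) * (a + b)| ≤ C * |a| * (1 + |b| ^ α) := by
  have hC₀ : 0 < C₀ := by linarith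
  have hpabs : ∀ x, p |x| = p x := by
    intro x
    rcases abs_choice x with h | h <;> rw [h]
    exact hp_even x
  have hp0 : ∀ x, p 0 ≤ p x := fun x => by
    rw [← hpabs x]
    exact hm.monotoneOn (Set.mem_Ici.2 le_rfl) (Set.mem_Ici.2 (abs_nonneg x)) (abs_nonneg x)
  have hp1 : ∀ a, |a| ≤ 1 → p a ≤ p 1 := fun a ha => by
    rw [← hpabs a]
    exact hm.monotoneOn (Set.mem_Ici.2 (abs_nonneg a)) (Set.mem_Ici.2 zero_le_one) ha
  set M := |p 0| + |p 1| with hM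
  have hM0 : 0 ≤ M := by positivity
  have hpM : ∀ a, |a| ≤ 1 → |p a| ≤ M := fun a ha => by
    have h1 := hp0 a
    have h2 := hp1 a ha
    rw [abs_le]
    constructor <;> linarith [neg_abs_le (p 0), le_abs_self (p 1), abs_nonneg (p 0), abs_nonneg (p 1)]
  -- reduction to pointwise bounds
  have key : ∀ R c : ℝ, 2 * R₀ ≤ R → 0 < c → 
      (∀ a b x : ℝ, |a| ≤ 1 → R ≤ |b| → R₀ ≤ |x| → |b| / 2 ≤ |x| → |x| ≤ 2 * |b| →
        |p x| ≤ 2 * C₀ * |b| ^ α → |x * deriv p x| ≤ 2 * C₀ * |b| ^ α → |b| ^ α ≤ 2 * |x| ^ α →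
        c * (1 + |b| ^ α) ≤ |p a - (p x + x * deriv p x)|) →
      ∃ R c C : ℝ, 1 ≤ R ∧ 0 < c ∧ 0 < C ∧
      ∀ a b : ℝ, |a| ≤ 1 → R ≤ |b| →
        c * |a| * (1 + |b| ^ α) ≤ |p a * a + p b * b - p (a + b) * (a + b)| ∧
        |p a * a + p b * b - p (a + b) * (a + b)| ≤ C * |a| * (1 + |b| ^ α) := by
    intro R c hR hc H
    refine ⟨R, c, M + 4 * C₀, by linarith, hc, by positivity, ?_⟩
    intro a b ha hb
    obtain ⟨t, ht, h⟩ := phi_mvt p hp a b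
    rw [h, abs_mul]
    set x := b + t * a with hx
    have hta : |t * a| ≤ 1 := by
      rw [abs_mul, abs_of_pos ht.1]
      have := abs_nonneg a
      nlinarith [ht.1, ht.2]
    have hx1 : |b| - 1 ≤ |x| := by
      have : |b| ≤ |x| + |t * a| := by
        have := abs_sub x (t * a)
        rwa [hx, add_sub_cancel_right] at this
      linarith
    have hx2 : |x| ≤ |b| + 1 := (abs_add_le b (t * a)).trans (by linarith)
    have hb0 : 0 < |b| := by linarith
    have hxR : R₀ ≤ |x| := by linarith
    have hxb1 : |b| / 2 ≤ |x| := by linarith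
    have hxb2 : |x| ≤ 2 * |b| := by linarith
    have hx0 : 0 < |x| := by linarith
    have e1 := rpow_cmp α hα |x| |b| hb0 hxb1 hxb2
    have e2 := rpow_cmp α hα |b| |x| hx0 (by linarith) (by linarith)
    have e3 : |p x| ≤ 2 * C₀ * |b| ^ α := by
      have := (hA2₀ x hxR).2
      nlinarith
    have e4 : |x * deriv p x| ≤ 2 * C₀ * |b| ^ α := by
      have h1 := (hA2₁ x hxR).2
      have h2 : |x| * |x| ^ (α - 1) = |x| ^ α := by
        rw [Real.rpow_sub_one hx0.ne']
        field_simp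
      rw [abs_mul]
      calc |x| * |deriv p x| ≤ |x| * (C₀ * |x| ^ (α - 1)) := by gcongr
        _ = C₀ * |x| ^ α := by rw [← h2]; ring
        _ ≤ C₀ * (2 * |b| ^ α) := by gcongr
        _ = _ := by ring
    have e5 := H a b x ha hb hxR hxb1 hxb2 e3 e4 e2
    have hbp : 0 < |b| ^ α := Real.rpow_pos_of_pos hb0 α
    constructor
    · calc c * |a| * (1 + |b| ^ α) = |a| * (c * (1 + |b| ^ α)) := by ring
        _ ≤ _ := by gcongr
    · have : |p a - (p x + x * deriv p x)| ≤ (M + 4 * C₀) * (1 + |b| ^ α) := by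
        have h1 := abs_sub (p a) (p x + x * deriv p x)
        have h2 := abs_add_le (p x) (x * deriv p x)
        have h3 := hpM a ha
        nlinarith [mul_nonneg hM0 hbp.le]
      calc _ ≤ |a| * ((M + 4 * C₀) * (1 + |b| ^ α)) := by gcongr
        _ = _ := by ring
  rcases lt_or_gt_of_ne hα0 with hneg | hpos
  · -- decaying case
    have hlim : Tendsto (fun x : ℝ => x ^ α) atTop (𝓝 0) := by
      simpa using tendsto_rpow_neg_atTop (neg_pos.2 hneg)
    have hp2 : p 2 ≤ 0 := by
      have hl : Tendsto (fun x : ℝ => C₀ * x ^ α) atTop (𝓝 0) := by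
        simpa using hlim.const_mul C₀
      refine ge_of_tendsto hl ?_
      filter_upwards [eventually_ge_atTop 2, eventually_ge_atTop R₀] with x h1 h2
      have hx : |x| = x := abs_of_nonneg (by linarith)
      have h3 := (hA2₀ x (by rw [hx]; exact h2)).2
      rw [hx] at h3
      have h4 := hm.monotoneOn (Set.mem_Ici.2 (by norm_num : (0:ℝ) ≤ 2))
        (Set.mem_Ici.2 (by linarith)) h1
      linarith [le_abs_self (p x)]
    have hp1n : p 1 < 0 := by
      have := hm (Set.mem_Ici.2 (by norm_num : (0:ℝ) ≤ 1))
        (Set.mem_Ici.2 (by norm_num : (0:ℝ) ≤ 2)) (by norm_num)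
      linarith
    have hl : Tendsto (fun x : ℝ => 4 * C₀ * x ^ α) atTop (𝓝 0) := by
      simpa using hlim.const_mul (4 * C₀)
    obtain ⟨R, hR⟩ := eventually_atTop.1
      (hl.eventually_lt_const (by linarith : (0:ℝ) < - p 1 / 2))
    refine key (max R (2 * R₀)) (-p 1 / 4) (le_max_right _ _) (by linarith) ?_
    intro a b x ha hb hxR _ _ e3 e4 _
    have hb1 : 1 ≤ |b| := by linarith [le_max_right R (2 * R₀)]
    have h1 := hR |b| (by linarith [le_max_left R (2 * R₀)])
    have h2 : |b| ^ α ≤ 1 := Real.rpow_le_one_of_one_le_of_nonpos hb1 hneg.le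
    have h3 := hp1 a ha
    have h4 := neg_abs_le (p x)
    have h5 := neg_abs_le (x * deriv p x)
    have h6 := neg_abs_le (p a - (p x + x * deriv p x))
    nlinarith
  · -- growing case
    have hlim : Tendsto (fun x : ℝ => c₀ * x ^ α) atTop atTop :=
      (tendsto_rpow_atTop hpos).const_mul_atTop hc₀
    obtain ⟨R, hR⟩ := eventually_atTop.1 (hlim.eventually_gt_atTop (4 * M))
    refine key (max R (2 * R₀)) (c₀ / 8) (le_max_right _ _) (by linarith) ?_
    intro a b x ha hb hxR _ _ e3 e4 e2
    have hb1 : 1 ≤ |b| := by linarith [le_max_right R (2 * R₀)]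
    have h1 := hR |b| (by linarith [le_max_left R (2 * R₀)])
    have h2 : 1 ≤ |b| ^ α := Real.one_le_rpow hb1 hpos.le
    have h3 := (abs_le.1 (hpM a ha)).2
    have h4 := (hA2₀ x hxR).1
    have h5 : c₀ * |b| ^ α ≤ 2 * |p x| := by nlinarith
    have h6 : |p x| = p x := by
      apply abs_of_nonneg
      by_contra hn
      push Not at hn
      rw [abs_of_neg hn] at h5
      linarith [hp0 x, neg_abs_le (p 0), abs_nonneg (p 1), abs_nonneg (p 0)]
    have h7 : 0 ≤ x * deriv p x := by
      have hpos' : ∀ y : ℝ, 0 < y → 0 ≤ deriv p y := by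
        intro y hy
        have hd := (hp y).hasDerivAt.hasDerivWithinAt (s := Set.Ici 0)
        rw [← derivWithin_of_mem_nhds (Ici_mem_nhds hy)]
        exact hm.monotoneOn.derivWithin_nonneg
      rcases le_total 0 x with h | h
      · rcases h.eq_or_lt with h | h
        · simp [← h]
        · exact mul_nonneg h.le (hpos' x h)
      · rcases h.eq_or_lt with h | h
        · simp [h]
        · have e : deriv p x = - deriv p (-x) := by
            have : p = fun y => p (-y) := by
              funext y
              exact (hp_even y).symm
            have h8 : deriv (fun y => p (-y)) x = - deriv p (-x) := deriv_comp_neg p x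
            rwa [← this] at h8
          rw [e]
          have := hpos' (-x) (by linarith)
          nlinarith
    have h8 := neg_abs_le (p a - (p x + x * deriv p x))
    nlinarith

/-- Under assumptions (A1) and (A2), the bound `|φ(a,b)| ≍ |a|(1 + |b|^α)`
holds for `|a| ≤ 1` and `|b|` large. -/
theorem phi_bounded_a_bound
    (α : ℝ) (hα : α ∈ Set.Icc (-1 : ℝ) 1) (hα0 : α ≠ 0)
    (p : ℝ → ℝ)
    -- (A1)
    (hp_smooth : ContDiff ℝ 2 p)
    (hp_even : ∀ x, p (-x) = p x)
    (hp_mono : StrictMonoOn p (Set.Ici (0 : ℝ)) ∨ StrictAntiOn p (Set.Ici (0 : ℝ)))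
    -- (A2)
    (c₀ C₀ R₀ : ℝ) (hc₀ : 0 < c₀) (hc₀C₀ : c₀ ≤ C₀) (hR₀ : 1 ≤ R₀)
    (hA2₀ : ∀ ξ : ℝ, R₀ ≤ |ξ| → c₀ * |ξ| ^ α ≤ |p ξ| ∧ |p ξ| ≤ C₀ * |ξ| ^ α)
    (hA2₁ : ∀ ξ : ℝ, R₀ ≤ |ξ| →
      c₀ * |ξ| ^ (α - 1) ≤ |deriv p ξ| ∧ |deriv p ξ| ≤ C₀ * |ξ| ^ (α - 1))
    (hA2₂ : ∀ ξ : ℝ, R₀ ≤ |ξ| →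
      c₀ * |ξ| ^ (α - 2) ≤ |deriv (deriv p) ξ| ∧ |deriv (deriv p) ξ| ≤ C₀ * |ξ| ^ (α - 2)) :
    ∃ R c C : ℝ, 1 ≤ R ∧ 0 < c ∧ 0 < C ∧
      ∀ a b : ℝ, |a| ≤ 1 → R ≤ |b| →
        c * |a| * (1 + |b| ^ α) ≤ |p a * a + p b * b - p (a + b) * (a + b)| ∧
        |p a * a + p b * b - p (a + b) * (a + b)| ≤ C * |a| * (1 + |b| ^ α) := by
  have hp : Differentiable ℝ p := hp_smooth.differentiable (by norm_num)
  rcases hp_mono with hm | hm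
  · exact phi_mono α hα hα0 p hp hp_even hm c₀ C₀ R₀ hc₀ hc₀C₀ hR₀ hA2₀ hA2₁
  · obtain ⟨R, c, C, h1, h2, h3, h⟩ := phi_mono α hα hα0 (fun x => - p x) hp.neg
      (fun x => by simp [hp_even x]) (fun x hx y hy hxy => neg_lt_neg (hm hx hy hxy))
      c₀ C₀ R₀ hc₀ hc₀C₀ hR₀
      (fun ξ hξ => by simpa only [abs_neg] using hA2₀ ξ hξ)
      (fun ξ hξ => by
        have e : deriv (fun x => - p x) ξ = - deriv p ξ := deriv.fun_neg
        rw [e, abs_neg]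
        exact hA2₁ ξ hξ)
    refine ⟨R, c, C, h1, h2, h3, fun a b ha hb => ?_⟩
    have e : p a * a + p b * b - p (a + b) * (a + b) =
      -(-p a * a + -p b * b - -p (a + b) * (a + b)) := by ring
    rw [e, abs_neg]
    exact h a b ha hb
end

section
/- Under assumptions (A1)–(A3), there exists a positive constant C (depending only on p, α, j*) such that for all ξ, η ∈ ℝ with ξ ≠ 0, η ≠ 0 and ξ − η ≠ 0, one has |m(ξ−η,η)| ≤ C [ 1/(|η| |ξ−η| |ξ|^{2j*−2}) + 1 + |ξ|(1 + 1/|η| + 1/|ξ−η|) ]. -/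
/-- Lower bound on `x (p (x+y) - p x)` for increasing `p`. -/
theorem core_lower
    (α : ℝ) (hα : α ∈ Set.Icc (-1 : ℝ) 1)
    (j : ℕ) (hj : 1 ≤ j)
    (p : ℝ → ℝ)
    (hp_smooth : ContDiff ℝ 2 p)
    (hp_mono : StrictMonoOn p (Set.Ici (0 : ℝ)))
    (c₀ R₀ : ℝ) (hc₀ : 0 < c₀) (hR₀ : 1 ≤ R₀)
    (hA2₁ : ∀ ξ : ℝ, R₀ ≤ |ξ| → c₀ * |ξ| ^ (α - 1) ≤ |deriv p ξ|)
    (δ₀ : ℝ) (hδ₀ : 0 < δ₀) (pt : ℝ → ℝ)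
    (hpt : Continuous pt) (hpt0 : pt 0 ≠ 0)
    (hA3 : ∀ ξ : ℝ, |ξ| ≤ δ₀ → p ξ = p 0 + ξ ^ (2 * j) * pt ξ) :
    ∃ c : ℝ, 0 < c ∧ ∀ x y : ℝ, 0 < x → x ≤ y →
      (c * (x * (x + y) ^ (2 * j)) ≤ x * (p (x + y) - p x) ∨
       c * x ≤ x * (p (x + y) - p x) ∨ c ≤ x * (p (x + y) - p x)) := by
  have hcont : Continuous p := hp_smooth.continuous
  have hdiff : Differentiable ℝ p := hp_smooth.differentiable (by norm_num)
  -- positivity of pt 0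
  have hpos : ∀ u, 0 < u → u ≤ δ₀ → 0 < pt u := by
    intro u hu hu'
    have h1 := hA3 u (by rwa [abs_of_pos hu])
    have h2 := hp_mono (Set.mem_Ici.2 le_rfl) (Set.mem_Ici.2 hu.le) hu
    have h3 : 0 < u ^ (2 * j) * pt u := by linarith
    exact (pos_iff_pos_of_mul_pos h3).1 (by positivity)
  have hP : 0 < pt 0 := by
    refine lt_of_le_of_ne ?_ hpt0.symm
    by_contra hneg
    push Not at hneg
    obtain ⟨ε, hε, h⟩ := Metric.continuous_iff.1 hpt 0 (-(pt 0)) (by linarith)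
    have h1 := h (min (ε / 2) δ₀) (by
      rw [Real.dist_eq, sub_zero, abs_of_pos (by positivity)]
      exact lt_of_le_of_lt (min_le_left _ _) (by linarith))
    have h2 := hpos (min (ε / 2) δ₀) (by positivity) (min_le_right _ _)
    rw [Real.dist_eq, abs_lt] at h1
    linarith [h1.2]
  set P := pt 0 with hPdef
  obtain ⟨ε, hε, hball⟩ := Metric.continuous_iff.1 hpt 0 (P / 4) (by linarith)
  obtain ⟨δ, hδ, hδδ, hδε, hδR⟩ : ∃ δ, 0 < δ ∧ δ ≤ δ₀ ∧ δ < ε ∧ δ ≤ R₀ := by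
    refine ⟨min (min (ε / 2) δ₀) R₀, by positivity, ?_, ?_, min_le_right _ _⟩
    · exact (min_le_left _ _).trans (min_le_right _ _)
    · have : min (min (ε / 2) δ₀) R₀ ≤ ε / 2 := (min_le_left _ _).trans (min_le_left _ _)
      linarith
  -- compactness
  obtain ⟨x₀, hx₀, hmin⟩ := (isCompact_Icc (a := δ / 2) (b := R₀)).exists_isMinOn
    (Set.nonempty_Icc.2 (by linarith)) (f := fun x => p (2 * x) - p x)
    (by fun_prop)
  have hx₀pos : 0 < x₀ := by linarith [hx₀.1]
  set κ := p (2 * x₀) - p x₀ with hκ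
  have hκpos : 0 < κ := by
    have := hp_mono (Set.mem_Ici.2 hx₀pos.le) (Set.mem_Ici.2 (by linarith : 0 ≤ 2 * x₀))
      (by linarith)
    linarith
  have hmono := hp_mono.monotoneOn
  set c := min (7 * P / 16) (min κ (c₀ / 4)) with hc
  have hc1 : c ≤ 7 * P / 16 := min_le_left _ _
  have hc2 : c ≤ κ := (min_le_right _ _).trans (min_le_left _ _)
  have hc3 : c ≤ c₀ / 4 := (min_le_right _ _).trans (min_le_right _ _)
  refine ⟨c, by positivity, ?_⟩
  intro x y hx hxy
  by_cases hz : x + y ≤ δ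
  · left
    set z := x + y with hzdef
    have hzpos : 0 < z := by linarith
    have e1 := hA3 z (by rw [abs_of_pos hzpos]; linarith)
    have e2 := hA3 x (by rw [abs_of_pos hx]; linarith)
    have b1 := hball z (by rw [Real.dist_eq, sub_zero, abs_of_pos hzpos]; linarith)
    have b2 := hball x (by rw [Real.dist_eq, sub_zero, abs_of_pos hx]; linarith)
    rw [Real.dist_eq, abs_lt] at b1 b2
    have hxz : x ^ (2 * j) ≤ z ^ (2 * j) / 4 := by
      have h1 : x ^ (2 * j) ≤ (z / 2) ^ (2 * j) := by
        apply pow_le_pow_left₀ hx.le; linarith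
      have h2 : (z / 2) ^ (2 * j) = z ^ (2 * j) * (1 / 4) ^ j := by
        rw [pow_mul, pow_mul, ← mul_pow]; congr 1; ring
      have h3 : ((1 : ℝ) / 4) ^ j ≤ 1 / 4 := by
        calc ((1 : ℝ) / 4) ^ j ≤ (1 / 4) ^ 1 :=
              pow_le_pow_of_le_one (by norm_num) (by norm_num) hj
          _ = 1 / 4 := pow_one _
      have h4 : 0 ≤ z ^ (2 * j) := by positivity
      nlinarith
    have hzp : 0 ≤ z ^ (2 * j) := by positivity
    have hxp : 0 ≤ x ^ (2 * j) := by positivity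
    have k1 : z ^ (2 * j) * (3 * P / 4) ≤ z ^ (2 * j) * pt z :=
      mul_le_mul_of_nonneg_left (by linarith [b1.1]) hzp
    have k2 : x ^ (2 * j) * pt x ≤ x ^ (2 * j) * (5 * P / 4) :=
      mul_le_mul_of_nonneg_left (by linarith [b2.2]) hxp
    have k3 : x ^ (2 * j) * (5 * P / 4) ≤ z ^ (2 * j) / 4 * (5 * P / 4) :=
      mul_le_mul_of_nonneg_right hxz (by positivity)
    have k4 : c * z ^ (2 * j) ≤ 7 * P / 16 * z ^ (2 * j) :=
      mul_le_mul_of_nonneg_right hc1 hzp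
    have k5 : c * z ^ (2 * j) ≤ p z - p x := by
      rw [e1, e2]; linarith
    calc c * (x * z ^ (2 * j)) = x * (c * z ^ (2 * j)) := by ring
      _ ≤ _ := mul_le_mul_of_nonneg_left k5 hx.le
  · push Not at hz
    right
    by_cases hxR : x ≤ R₀
    · left
      have hm : δ / 2 ≤ max x (δ / 2) := le_max_right _ _
      have hm' : x ≤ max x (δ / 2) := le_max_left _ _
      have hm2 : 2 * max x (δ / 2) ≤ x + y := by
        rcases max_cases x (δ / 2) with h | h <;> rw [h.1] <;> linarith
      have h1 := isMinOn_iff.1 hmin (max x (δ / 2)) ⟨hm, max_le hxR (by linarith)⟩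
      have h2 := hmono (Set.mem_Ici.2 hx.le) (Set.mem_Ici.2 (hx.le.trans hm')) hm'
      have h3 := hmono (Set.mem_Ici.2 (by linarith : 0 ≤ 2 * max x (δ / 2)))
        (Set.mem_Ici.2 (by linarith : 0 ≤ x + y)) hm2
      rw [mul_comm]
      exact mul_le_mul_of_nonneg_left (by linarith) hx.le
    · right
      push Not at hxR
      obtain ⟨t, ht, hte⟩ := exists_deriv_eq_slope p (by linarith : x < 2 * x)
        hcont.continuousOn hdiff.differentiableOn
      have h3 := hmono (Set.mem_Ici.2 (by linarith : 0 ≤ 2 * x))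
        (Set.mem_Ici.2 (by linarith : 0 ≤ x + y)) (by linarith : 2 * x ≤ x + y)
      have h4 := hp_mono (Set.mem_Ici.2 hx.le) (Set.mem_Ici.2 (by linarith : 0 ≤ 2 * x))
        (by linarith)
      have htpos : 0 < t := by linarith [ht.1]
      have hd : 0 < deriv p t := by
        rw [hte]; apply div_pos <;> linarith
      have h5 := hA2₁ t (by rw [abs_of_pos htpos]; linarith [ht.1])
      rw [abs_of_pos hd, abs_of_pos htpos] at h5
      have h6 : (2 * x) ^ (-2 : ℝ) ≤ t ^ (α - 1) := by
        calc (2 * x) ^ (-2 : ℝ) ≤ t ^ (-2 : ℝ) :=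
              Real.rpow_le_rpow_of_nonpos htpos ht.2.le (by norm_num)
          _ ≤ t ^ (α - 1) := by
              apply Real.rpow_le_rpow_of_exponent_le
              · linarith [ht.1]
              · linarith [hα.1]
      rw [Real.rpow_neg (by linarith), show (2 : ℝ) = ((2 : ℕ) : ℝ) by norm_num,
        Real.rpow_natCast] at h6
      push_cast at h6
      have h7 : p (2 * x) - p x = deriv p t * x := by
        rw [hte]; field_simp; ring
      have h8 : c₀ * ((2 * x) ^ 2)⁻¹ ≤ deriv p t :=
        (mul_le_mul_of_nonneg_left h6 hc₀.le).trans h5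
      calc c ≤ c₀ / 4 := hc3
        _ = x * (c₀ * ((2 * x) ^ 2)⁻¹ * x) := by field_simp; norm_num
        _ ≤ x * (deriv p t * x) := by gcongr
        _ ≤ x * (p (x + y) - p x) := by
            rw [← h7]; apply mul_le_mul_of_nonneg_left _ hx.le; linarith

/-- Reduction to positive ordered variables. -/
theorem sym_reduce (p : ℝ → ℝ) (hp_even : ∀ x, p (-x) = p x)
    (hp_mono : StrictMonoOn p (Set.Ici (0 : ℝ)))
    (a b : ℝ) (ha : a ≠ 0) (hb : b ≠ 0) (hab : a + b ≠ 0) :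
    ∃ x y : ℝ, 0 < x ∧ x ≤ y ∧
      x * (p (x + y) - p x) ≤ |p a * a + p b * b - p (a + b) * (a + b)| ∧
      |a| * |b| * |a + b| = x * y * (x + y) ∧ |a + b| ≤ x + y ∧
      (x = |a| ∨ x = |b| ∨ x = |a + b|) := by
  have key : ∀ u v D : ℝ, 0 < u → 0 < v → 
      (D = p (u + v) * (u + v) - p u * u - p v * v ∨
       D = -(p (u + v) * (u + v) - p u * u - p v * v)) →
      ∀ K s : ℝ, K = u * v * (u + v) → s ≤ u + v →
      ∃ x y : ℝ, 0 < x ∧ x ≤ y ∧ x * (p (x + y) - p x) ≤ |D| ∧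
        K = x * y * (x + y) ∧ s ≤ x + y ∧ (x = u ∨ x = v) := by
    intro u v D hu hv hD K s hK hs
    have m1 := hp_mono (Set.mem_Ici.2 hu.le) (Set.mem_Ici.2 (by linarith : 0 ≤ u + v))
        (by linarith)
    have m2 := hp_mono (Set.mem_Ici.2 hv.le) (Set.mem_Ici.2 (by linarith : 0 ≤ u + v))
        (by linarith)
    have n1 : 0 < u * (p (u + v) - p u) := mul_pos hu (by linarith)
    have n2 : 0 < v * (p (u + v) - p v) := mul_pos hv (by linarith)
    have hDD : |D| = u * (p (u + v) - p u) + v * (p (u + v) - p v) := by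
      have e : p (u + v) * (u + v) - p u * u - p v * v =
          u * (p (u + v) - p u) + v * (p (u + v) - p v) := by ring
      rw [e] at hD
      rcases hD with h | h <;> rw [h]
      · rw [abs_of_pos (by linarith)]
      · rw [abs_neg, abs_of_pos (by linarith)]
    rcases le_total u v with h | h
    · exact ⟨u, v, hu, h, by linarith, hK, hs, Or.inl rfl⟩
    · refine ⟨v, u, hv, h, ?_, by rw [hK]; ring, by linarith, Or.inr rfl⟩
      rw [add_comm v u]; linarith
  rcases lt_or_gt_of_ne ha with ha | ha <;> rcases lt_or_gt_of_ne hb with hb | hb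
  · obtain ⟨x, y, h1, h2, h3, h4, h5, h6⟩ := key (-a) (-b)
      (p a * a + p b * b - p (a + b) * (a + b)) (by linarith) (by linarith)
      (Or.inl (by rw [show -a + -b = -(a + b) by ring]; simp only [hp_even]; ring))
      (|a| * |b| * |a + b|) |a + b|
      (by rw [abs_of_neg ha, abs_of_neg hb, abs_of_neg (by linarith)]; ring)
      (by rw [abs_of_neg (by linarith)]; linarith)
    refine ⟨x, y, h1, h2, h3, h4, h5, ?_⟩
    rw [abs_of_neg ha, abs_of_neg hb]; tauto
  · rcases lt_or_gt_of_ne hab with hab | hab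
    · obtain ⟨x, y, h1, h2, h3, h4, h5, h6⟩ := key b (-(a + b))
        (p a * a + p b * b - p (a + b) * (a + b)) (by linarith) (by linarith)
        (Or.inr (by rw [show b + -(a + b) = -a by ring]; simp only [hp_even]; ring))
        (|a| * |b| * |a + b|) |a + b|
        (by rw [abs_of_neg ha, abs_of_pos hb, abs_of_neg (by linarith)]; ring)
        (by rw [abs_of_neg (by linarith)]; linarith)
      refine ⟨x, y, h1, h2, h3, h4, h5, ?_⟩
      rw [abs_of_pos hb, abs_of_neg hab]; tauto
    · obtain ⟨x, y, h1, h2, h3, h4, h5, h6⟩ := key (-a) (a + b)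
        (p a * a + p b * b - p (a + b) * (a + b)) (by linarith) (by linarith)
        (Or.inl (by rw [show -a + (a + b) = b by ring]; simp only [hp_even]; ring))
        (|a| * |b| * |a + b|) |a + b|
        (by rw [abs_of_neg ha, abs_of_pos hb, abs_of_pos (by linarith)]; ring)
        (by rw [abs_of_pos (by linarith)]; linarith)
      refine ⟨x, y, h1, h2, h3, h4, h5, ?_⟩
      rw [abs_of_neg ha, abs_of_pos hab]; tauto
  · rcases lt_or_gt_of_ne hab with hab | hab
    · obtain ⟨x, y, h1, h2, h3, h4, h5, h6⟩ := key a (-(a + b))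
        (p a * a + p b * b - p (a + b) * (a + b)) (by linarith) (by linarith)
        (Or.inr (by rw [show a + -(a + b) = -b by ring]; simp only [hp_even]; ring))
        (|a| * |b| * |a + b|) |a + b|
        (by rw [abs_of_pos ha, abs_of_neg hb, abs_of_neg (by linarith)]; ring)
        (by rw [abs_of_neg (by linarith)]; linarith)
      refine ⟨x, y, h1, h2, h3, h4, h5, ?_⟩
      rw [abs_of_pos ha, abs_of_neg hab]; tauto
    · obtain ⟨x, y, h1, h2, h3, h4, h5, h6⟩ := key (-b) (a + b)
        (p a * a + p b * b - p (a + b) * (a + b)) (by linarith) (by linarith)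
        (Or.inl (by rw [show -b + (a + b) = a by ring]; simp only [hp_even]; ring))
        (|a| * |b| * |a + b|) |a + b|
        (by rw [abs_of_pos ha, abs_of_neg hb, abs_of_pos (by linarith)]; ring)
        (by rw [abs_of_pos (by linarith)]; linarith)
      refine ⟨x, y, h1, h2, h3, h4, h5, ?_⟩
      rw [abs_of_neg hb, abs_of_pos hab]; tauto
  · obtain ⟨x, y, h1, h2, h3, h4, h5, h6⟩ := key a b
      (p a * a + p b * b - p (a + b) * (a + b)) (by linarith) (by linarith)
      (Or.inr (by ring))
      (|a| * |b| * |a + b|) |a + b|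
      (by rw [abs_of_pos ha, abs_of_pos hb, abs_of_pos (by linarith)])
      (by rw [abs_of_pos (by linarith)])
    refine ⟨x, y, h1, h2, h3, h4, h5, ?_⟩
    rw [abs_of_pos ha, abs_of_pos hb]; tauto

/-- The bound for increasing `p`. -/
theorem bound_of_mono
    (α : ℝ) (hα : α ∈ Set.Icc (-1 : ℝ) 1)
    (j : ℕ) (hj : 1 ≤ j)
    (p : ℝ → ℝ)
    (hp_smooth : ContDiff ℝ 2 p)
    (hp_even : ∀ x, p (-x) = p x)
    (hp_mono : StrictMonoOn p (Set.Ici (0 : ℝ)))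
    (c₀ R₀ : ℝ) (hc₀ : 0 < c₀) (hR₀ : 1 ≤ R₀)
    (hA2₁ : ∀ ξ : ℝ, R₀ ≤ |ξ| → c₀ * |ξ| ^ (α - 1) ≤ |deriv p ξ|)
    (δ₀ : ℝ) (hδ₀ : 0 < δ₀) (pt : ℝ → ℝ)
    (hpt : Continuous pt) (hpt0 : pt 0 ≠ 0)
    (hA3 : ∀ ξ : ℝ, |ξ| ≤ δ₀ → p ξ = p 0 + ξ ^ (2 * j) * pt ξ) :
    ∃ C : ℝ, 0 < C ∧
      ∀ ξ η : ℝ, ξ ≠ 0 → η ≠ 0 → ξ - η ≠ 0 →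
        |ξ / (2 * (p (ξ - η) * (ξ - η) + p η * η - p ξ * ξ))| ≤
          C * (1 / (|η| * |ξ - η| * |ξ| ^ (2 * j - 2)) +
            1 + |ξ| * (1 + 1 / |η| + 1 / |ξ - η|)) := by
  obtain ⟨c, hc, hlow⟩ := core_lower α hα j hj p hp_smooth hp_mono c₀ R₀ hc₀ hR₀ hA2₁ δ₀ hδ₀
    pt hpt hpt0 hA3
  refine ⟨1 / c, by positivity, ?_⟩
  intro ξ η hξ hη hd
  obtain ⟨x, y, hx, hxy, hF, hprod, hle, hxs⟩ := sym_reduce p hp_even hp_mono (ξ - η) η hd hη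
    (by simpa using hξ)
  rw [sub_add_cancel] at hF hprod hle hxs
  have hlow' := hlow x y hx hxy
  set D := p (ξ - η) * (ξ - η) + p η * η - p ξ * ξ with hD
  have hA : 0 < |ξ - η| := abs_pos.2 hd
  have hB : 0 < |η| := abs_pos.2 hη
  have hX : 0 < |ξ| := abs_pos.2 hξ
  rw [abs_div, abs_mul, abs_of_pos (two_pos : (0 : ℝ) < 2)]
  generalize |ξ - η| = A at *
  generalize |η| = B at *
  generalize |ξ| = X at *
  generalize |D| = E at *
  have t1 : 0 < 1 / (B * A * X ^ (2 * j - 2)) := by positivity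
  have t2 : 0 < X * (1 / B) := by positivity
  have t3 : 0 < X * (1 / A) := by positivity
  -- it suffices to find `L > 0` with `L ≤ E` and `c * X / L ≤ RHS`
  have fin : ∀ L : ℝ, 0 < L → c * L ≤ E → X / L ≤ 1 / (B * A * X ^ (2 * j - 2)) +
            1 + X * (1 + 1 / B + 1 / A) →
      X / (2 * E) ≤ 1 / c * (1 / (B * A * X ^ (2 * j - 2)) +
            1 + X * (1 + 1 / B + 1 / A)) := by
    intro L hL hLE h
    have hcL : 0 < c * L := by positivity
    calc X / (2 * E) ≤ X / (c * L) := by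
          apply div_le_div_of_nonneg_left hX.le hcL; linarith
      _ = 1 / c * (X / L) := by field_simp
      _ ≤ _ := mul_le_mul_of_nonneg_left h (by positivity)
  rcases hlow' with h | h | h
  · have hz : 0 < x + y := by linarith
    refine fin (x * (x + y) ^ (2 * j)) (by positivity) (by linarith) ?_
    have : X / (x * (x + y) ^ (2 * j)) ≤ 1 / (B * A * X ^ (2 * j - 2)) := by
      rw [div_le_div_iff₀ (by positivity) (by positivity)]
      have e : (x + y) ^ (2 * j) = (x + y) ^ (2 * j - 2) * (x + y) ^ 2 := by
        rw [← pow_add]; congr 1; omega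
      calc X * (B * A * X ^ (2 * j - 2)) = (A * B * X) * X ^ (2 * j - 2) := by ring
        _ ≤ (A * B * X) * (x + y) ^ (2 * j - 2) := by gcongr
        _ = x * y * (x + y) * (x + y) ^ (2 * j - 2) := by rw [hprod]
        _ ≤ x * (x + y) * (x + y) * (x + y) ^ (2 * j - 2) := by
            have : y ≤ x + y := by linarith
            gcongr
        _ = 1 * (x * (x + y) ^ (2 * j)) := by rw [e]; ring
    nlinarith
  · refine fin x hx (by linarith) ?_
    rcases hxs with e | e | e
    · rw [e, div_eq_mul_one_div]; nlinarith
    · rw [e, div_eq_mul_one_div]; nlinarith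
    · rw [e, div_self hX.ne']; nlinarith
  · refine fin 1 one_pos (by linarith) ?_
    rw [div_one]; nlinarith


/-- Under assumptions (A1)–(A3), the multiplier `m` is bounded by `m₁ + m₂`:
`|m(ξ−η,η)| ≲ 1/(|η||ξ−η||ξ|^{2j*−2}) + 1 + |ξ|(1 + 1/|η| + 1/|ξ−η|)`. -/
theorem multiplier_m_upper_bound
    (α : ℝ) (hα : α ∈ Set.Icc (-1 : ℝ) 1) (hα0 : α ≠ 0)
    (j : ℕ) (hj : 1 ≤ j)
    (p : ℝ → ℝ)
    -- (A1)
    (hp_smooth : ContDiff ℝ 2 p)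
    (hp_even : ∀ x, p (-x) = p x)
    (hp_mono : StrictMonoOn p (Set.Ici (0 : ℝ)) ∨ StrictAntiOn p (Set.Ici (0 : ℝ)))
    -- (A2)
    (c₀ C₀ R₀ : ℝ) (hc₀ : 0 < c₀) (hc₀C₀ : c₀ ≤ C₀) (hR₀ : 1 ≤ R₀)
    (hA2₀ : ∀ ξ : ℝ, R₀ ≤ |ξ| → c₀ * |ξ| ^ α ≤ |p ξ| ∧ |p ξ| ≤ C₀ * |ξ| ^ α)
    (hA2₁ : ∀ ξ : ℝ, R₀ ≤ |ξ| →
      c₀ * |ξ| ^ (α - 1) ≤ |deriv p ξ| ∧ |deriv p ξ| ≤ C₀ * |ξ| ^ (α - 1))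
    (hA2₂ : ∀ ξ : ℝ, R₀ ≤ |ξ| →
      c₀ * |ξ| ^ (α - 2) ≤ |deriv (deriv p) ξ| ∧ |deriv (deriv p) ξ| ≤ C₀ * |ξ| ^ (α - 2))
    -- (A3)
    (δ₀ : ℝ) (hδ₀ : 0 < δ₀) (pt : ℝ → ℝ)
    (hpt_lip : LocallyLipschitz pt) (hpt0 : pt 0 ≠ 0)
    (hA3 : ∀ ξ : ℝ, |ξ| ≤ δ₀ → p ξ = p 0 + ξ ^ (2 * j) * pt ξ) :
    ∃ C : ℝ, 0 < C ∧
      ∀ ξ η : ℝ, ξ ≠ 0 → η ≠ 0 → ξ - η ≠ 0 →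
        |ξ / (2 * (p (ξ - η) * (ξ - η) + p η * η - p ξ * ξ))| ≤
          C * (1 / (|η| * |ξ - η| * |ξ| ^ (2 * j - 2)) +
            1 + |ξ| * (1 + 1 / |η| + 1 / |ξ - η|)) := by
  rcases hp_mono with hm | hm
  · exact bound_of_mono α hα j hj p hp_smooth hp_even hm c₀ R₀ hc₀ hR₀
      (fun ξ h => (hA2₁ ξ h).1) δ₀ hδ₀ pt hpt_lip.continuous hpt0 hA3
  · obtain ⟨C, hC, h⟩ := bound_of_mono α hα j hj (fun x => -p x) hp_smooth.neg
      (fun x => by simp only [hp_even]) (fun x hx y hy hxy => neg_lt_neg (hm hx hy hxy))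
      c₀ R₀ hc₀ hR₀
      (fun ξ h => by
        have e : deriv (fun x => -p x) ξ = -deriv p ξ := deriv.fun_neg
        rw [e, abs_neg]; exact (hA2₁ ξ h).1)
      δ₀ hδ₀ (fun x => -pt x) hpt_lip.continuous.neg (neg_ne_zero.2 hpt0)
      (fun ξ h => by simp only [hA3 ξ h]; ring)
    refine ⟨C, hC, fun ξ η h1 h2 h3 => ?_⟩
    have h4 := h ξ η h1 h2 h3
    have e : ξ / (2 * (-p (ξ - η) * (ξ - η) + -p η * η - -p ξ * ξ)) =
        -(ξ / (2 * (p (ξ - η) * (ξ - η) + p η * η - p ξ * ξ))) := by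
      rw [← div_neg]; congr 1; ring
    rw [e, abs_neg] at h4
    exact h4
end
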